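/- Nonexistence of periodic spiraling geodesic configurations around a vertex: Let n ≥ 1 and, for each index i ∈ ℤ/nℤ, let F_i be a Minkowski norm on ℝ², let u_i ∈ ℝ² be F_i-unit, and let v_i ∈ ℝ² satisfy F_i(v_i) = 1 and F_{i−1}(s·v_i) = F_i(s·v_i) for all s ∈ ℝ. Assume that for every i: (a) u_i is not a scalar multiple of v_i and not a scalar multiple of v_{i+1}; (b) v_{i+1} is a positive linear combination of v_i and u_i; and (c) the edge-crossing equation ⟨u_i, v_{i+1}⟩_{u_i}^{F_i} = ⟨u_{i+1}, v_{i+1}⟩_{u_{i+1}}^{F_{i+1}} holds. Then no such configuration exists (the hypotheses are contradictory). -/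

import Mathlib

/-!
Write `α i = ⟨u i, ·⟩_{u i}`, the Legendre dual covector of `u i`. Euler's identities give
`α i (u i) = 1`, and strict convexity of `F²` along lines missing the origin gives the fundamental
inequality `α i w < 1` for every `F i`-unit `w` not parallel to `u i` (`minkHess_lt_one`).
Consequently (`minkHess_lt_of_between`), if `p = A x + B u` with `A, B > 0`, all three vectors
unit, and `0 ≤ α x`, then `α x < α p`: moving the unit vector `x` towards `u` increases `α`.

Put `c i = α i (v i)`; by the edge-crossing equation `c (i + 1) = α i (v (i + 1))`.

* If `0 ≤ c i`, then `c i < c (i + 1)`, since `v (i + 1)` lies between `v i` and `u i`. Hence the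
  maximum of `c` over the finite cycle cannot be nonnegative, and all `c i` are negative.
* If all `c i` are negative, use the opposite unit vectors `-v i / F i (-v i)` and their values
  `d i = -c i / F i (-v i) > 0`. Now `-v i` lies between `-v (i + 1)` and `u i`, so
  `d (i + 1) < d i` for all `i`, which is impossible on a finite cycle.

The norms need not be reversible, which is why the two signs are treated separately: `α i` is
monotone along the arc from `v i` to `u i` only where it is nonnegative.
-/

/-- One half of the second Fréchet derivative of `F²` at `y`, evaluated at `(u, w)`:
the fundamental bilinear form `⟨u,w⟩_y^F` associated to a Minkowski norm. -/
noncomputable def minkHess {V : Type*} [NormedAddCommGroup V] [NormedSpace ℝ V]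
    (F : V → ℝ) (y u w : V) : ℝ :=
  (1 / 2) * fderiv ℝ (fun z => fderiv ℝ (fun x => F x ^ 2) z) y u w

/-- `F` is a Minkowski norm on `V`. -/
structure IsMinkowskiNorm {V : Type*} [NormedAddCommGroup V] [NormedSpace ℝ V]
    (F : V → ℝ) : Prop where
  continuous : Continuous F
  nonneg : ∀ y : V, 0 ≤ F y
  pos : ∀ y : V, y ≠ 0 → 0 < F y
  smooth : ContDiffOn ℝ (⊤ : ℕ∞) F {(0 : V)}ᶜ
  homog : ∀ l : ℝ, 0 ≤ l → ∀ y : V, F (l • y) = l * F y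
  posdef : ∀ y : V, y ≠ 0 → ∀ u : V, u ≠ 0 → 0 < minkHess F y u u

section MinkowskiNorm

variable {V : Type*} [NormedAddCommGroup V] [NormedSpace ℝ V] {F : V → ℝ}

theorem IsMinkowskiNorm.map_zero (hF : IsMinkowskiNorm F) : F 0 = 0 := by
  have h := hF.homog 0 le_rfl 0
  simpa using h

theorem IsMinkowskiNorm.ne_zero_of_unit (hF : IsMinkowskiNorm F) {y : V} (hy : F y = 1) :
    y ≠ 0 := by
  rintro rfl
  rw [hF.map_zero] at hy
  exact zero_ne_one hy

theorem IsMinkowskiNorm.contDiffAt_sq (hF : IsMinkowskiNorm F) {y : V} (hy : y ≠ 0) :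
    ContDiffAt ℝ 2 (fun x => F x ^ 2) y := by
  have h : ContDiffAt ℝ (⊤ : ℕ∞) F y :=
    hF.smooth.contDiffAt (isOpen_compl_singleton.mem_nhds hy)
  exact (h.pow 2).of_le (by norm_cast)

theorem IsMinkowskiNorm.hasFDerivAt_sq (hF : IsMinkowskiNorm F) {y : V} (hy : y ≠ 0) :
    HasFDerivAt (fun x => F x ^ 2) (fderiv ℝ (fun x => F x ^ 2) y) y :=
  ((hF.contDiffAt_sq hy).differentiableAt (by norm_num)).hasFDerivAt

theorem IsMinkowskiNorm.hasFDerivAt_fderiv_sq (hF : IsMinkowskiNorm F) {y : V} (hy : y ≠ 0) :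
    HasFDerivAt (fun z => fderiv ℝ (fun x => F x ^ 2) z)
      (fderiv ℝ (fun z => fderiv ℝ (fun x => F x ^ 2) z) y) y := by
  have h : ContDiffAt ℝ 1 (fderiv ℝ (fun x => F x ^ 2)) y :=
    (hF.contDiffAt_sq hy).fderiv_right (by norm_num)
  exact (h.differentiableAt (by norm_num)).hasFDerivAt

/-- The differential of `F²` is positively homogeneous of degree one. -/
theorem IsMinkowskiNorm.fderiv_sq_smul (hF : IsMinkowskiNorm F) (y : V) {l : ℝ} (hl : 0 < l) :
    fderiv ℝ (fun x => F x ^ 2) (l • y) = l • fderiv ℝ (fun x => F x ^ 2) y := by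
  have h1 : fderiv ℝ (fun x => F (l • x) ^ 2) y
      = l • fderiv ℝ (fun x => F x ^ 2) (l • y) :=
    fderiv_comp_smul (f := fun x => F x ^ 2) (x := y) l
  have h2 : (fun x => F (l • x) ^ 2) = (l ^ 2) • (fun x => F x ^ 2) := by
    funext x
    simp only [Pi.smul_apply, smul_eq_mul]
    rw [hF.homog l hl.le x]
    ring
  rw [h2, fderiv_const_smul_field, pow_two, mul_smul] at h1
  exact ((smul_right_injective _ hl.ne') h1).symm

/-- Euler's identity for the differential of `F²`. -/
theorem IsMinkowskiNorm.minkHess_self (hF : IsMinkowskiNorm F) {y : V} (hy : y ≠ 0) (w : V) :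
    minkHess F y y w = (1 / 2) * fderiv ℝ (fun x => F x ^ 2) y w := by
  have hline : HasDerivAt (fun t : ℝ => t • y) y 1 := by
    simpa using (hasDerivAt_id (1 : ℝ)).smul_const y
  have h1 : HasDerivAt (fun t : ℝ => fderiv ℝ (fun x => F x ^ 2) (t • y))
      (fderiv ℝ (fun z => fderiv ℝ (fun x => F x ^ 2) z) y y) 1 :=
    HasFDerivAt.comp_hasDerivAt (1 : ℝ)
      (by simpa using hF.hasFDerivAt_fderiv_sq hy) hline
  have h2 : HasDerivAt (fun t : ℝ => t • fderiv ℝ (fun x => F x ^ 2) y)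
      (fderiv ℝ (fun x => F x ^ 2) y) 1 := by
    simpa using (hasDerivAt_id (1 : ℝ)).smul_const (fderiv ℝ (fun x => F x ^ 2) y)
  have h3 : (fun t : ℝ => fderiv ℝ (fun x => F x ^ 2) (t • y))
      =ᶠ[nhds 1] fun t : ℝ => t • fderiv ℝ (fun x => F x ^ 2) y := by
    filter_upwards [lt_mem_nhds (zero_lt_one (α := ℝ))] with t ht
    exact hF.fderiv_sq_smul y ht
  rw [minkHess, h1.unique (h2.congr_of_eventuallyEq h3)]

/-- Euler's identity for `F²`. -/
theorem IsMinkowskiNorm.fderiv_sq_self (hF : IsMinkowskiNorm F) {y : V} (hy : y ≠ 0) :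
    fderiv ℝ (fun x => F x ^ 2) y y = 2 * F y ^ 2 := by
  have hline : HasDerivAt (fun t : ℝ => t • y) y 1 := by
    simpa using (hasDerivAt_id (1 : ℝ)).smul_const y
  have h1 : HasDerivAt (fun t : ℝ => F (t • y) ^ 2)
      (fderiv ℝ (fun x => F x ^ 2) y y) 1 :=
    HasFDerivAt.comp_hasDerivAt (f := fun t : ℝ => t • y) (l := fun x => F x ^ 2) (1 : ℝ)
      (by simpa using hF.hasFDerivAt_sq hy) hline
  have h2 : HasDerivAt (fun t : ℝ => t ^ 2 * F y ^ 2) (2 * F y ^ 2) 1 := by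
    simpa using (hasDerivAt_pow 2 (1 : ℝ)).mul_const (F y ^ 2)
  have h3 : (fun t : ℝ => F (t • y) ^ 2) =ᶠ[nhds 1] fun t : ℝ => t ^ 2 * F y ^ 2 := by
    filter_upwards [lt_mem_nhds (zero_lt_one (α := ℝ))] with t ht
    rw [hF.homog t ht.le y, mul_pow]
  exact h1.unique (h2.congr_of_eventuallyEq h3)

theorem IsMinkowskiNorm.minkHess_unit (hF : IsMinkowskiNorm F) {y : V} (hy : F y = 1) :
    minkHess F y y y = 1 := by
  have hy0 := hF.ne_zero_of_unit hy
  rw [hF.minkHess_self hy0, hF.fderiv_sq_self hy0, hy]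
  norm_num

theorem minkHess_add_smul (y u x z : V) (a b : ℝ) :
    minkHess F y u (a • x + b • z) = a * minkHess F y u x + b * minkHess F y u z := by
  simp only [minkHess, map_add, map_smul, smul_eq_mul]
  ring

theorem minkHess_smul (y u x : V) (a : ℝ) :
    minkHess F y u (a • x) = a * minkHess F y u x := by
  simp only [minkHess, map_smul, smul_eq_mul]
  ring

/-- The graph of `F²` lies strictly above its tangent plane along any line missing the origin. -/
theorem IsMinkowskiNorm.tangent_lt (hF : IsMinkowskiNorm F) {y z : V} (hz : z ≠ 0)
    (hline : ∀ t : ℝ, y + t • z ≠ 0) :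
    F y ^ 2 + fderiv ℝ (fun x => F x ^ 2) y z < F (y + z) ^ 2 := by
  have hl : ∀ t : ℝ, HasDerivAt (fun t : ℝ => y + t • z) z t := fun t => by
    simpa using ((hasDerivAt_id t).smul_const z).const_add y
  have h1 : ∀ t : ℝ, HasDerivAt (fun t : ℝ => F (y + t • z) ^ 2)
      (fderiv ℝ (fun x => F x ^ 2) (y + t • z) z) t := fun t =>
    HasFDerivAt.comp_hasDerivAt (f := fun t : ℝ => y + t • z) (l := fun x => F x ^ 2) t
      (hF.hasFDerivAt_sq (hline t)) (hl t)
  have h2 : ∀ t : ℝ, HasDerivAt (fun t : ℝ => fderiv ℝ (fun x => F x ^ 2) (y + t • z) z)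
      (fderiv ℝ (fun z => fderiv ℝ (fun x => F x ^ 2) z) (y + t • z) z z) t := fun t => by
    have h := HasFDerivAt.comp_hasDerivAt (f := fun t : ℝ => y + t • z) t
      (hF.hasFDerivAt_fderiv_sq (hline t)) (hl t)
    simpa using h.clm_apply (hasDerivAt_const t z)
  have hmono : StrictMono fun t : ℝ => fderiv ℝ (fun x => F x ^ 2) (y + t • z) z := by
    refine strictMono_of_hasDerivAt_pos h2 fun t => ?_
    have h := hF.posdef (y + t • z) (hline t) z hz
    rw [minkHess] at h
    linarith
  obtain ⟨s, hs, hs'⟩ := exists_hasDerivAt_eq_slope (fun t : ℝ => F (y + t • z) ^ 2)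
    (fun t => fderiv ℝ (fun x => F x ^ 2) (y + t • z) z) (zero_lt_one (α := ℝ))
    (fun t _ => (h1 t).continuousAt.continuousWithinAt) (fun t _ => h1 t)
  have h0 := hmono hs.1
  simp only [zero_smul, add_zero, one_smul, sub_zero, div_one] at hs' h0
  linarith

/-- The strict fundamental inequality for unit vectors. -/
theorem IsMinkowskiNorm.minkHess_lt_one (hF : IsMinkowskiNorm F) {y w : V} (hy : F y = 1)
    (hw : F w = 1) (hpar : ∀ c : ℝ, y ≠ c • w) : minkHess F y y w < 1 := by
  have hy0 := hF.ne_zero_of_unit hy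
  have hw0 := hF.ne_zero_of_unit hw
  have hz : w - y ≠ 0 := by
    intro h
    exact hpar 1 (by rw [one_smul]; exact (sub_eq_zero.mp h).symm)
  have hline : ∀ t : ℝ, y + t • (w - y) ≠ 0 := by
    intro t h
    have h' : (1 - t) • y = (-t) • w := by
      have : (1 - t) • y - (-t) • w = y + t • (w - y) := by module
      exact sub_eq_zero.mp (this.trans h)
    by_cases ht : 1 - t = 0
    · have ht' : t = 1 := by linarith
      subst ht'
      simp at h'
      exact hw0 h'
    · refine hpar ((1 - t)⁻¹ * (-t)) ?_
      rw [mul_smul, ← h', smul_smul, inv_mul_cancel₀ ht, one_smul]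
  have h := hF.tangent_lt hz hline
  rw [map_sub, hF.fderiv_sq_self hy0, add_sub_cancel, hy, hw] at h
  rw [hF.minkHess_self hy0]
  linarith

/-- Moving a unit vector `x` towards `u` along the unit circle increases the covector dual to `u`,
provided this covector is nonnegative at `x`. -/
theorem IsMinkowskiNorm.minkHess_lt_of_between (hF : IsMinkowskiNorm F) {u x p : V} {A B : ℝ}
    (hA : 0 < A) (hB : 0 < B) (hu : F u = 1) (hx : F x = 1) (hp : F p = 1)
    (hpar : ∀ c : ℝ, u ≠ c • x) (hcomb : p = A • x + B • u)
    (hnonneg : 0 ≤ minkHess F u u x) : minkHess F u u x < minkHess F u u p := by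
  have hx1 : minkHess F u u x < 1 := hF.minkHess_lt_one hu hx hpar
  -- Evaluating the covector dual to `p` on `p = A x + B u` gives the triangle inequality.
  have hpx : minkHess F p p x < 1 := by
    refine hF.minkHess_lt_one hp hx fun c hc => hpar (B⁻¹ * (c - A)) ?_
    have h : B • u = (c - A) • x := by
      rw [sub_smul, ← hc, hcomb]
      abel
    rw [mul_smul, ← h, smul_smul, inv_mul_cancel₀ hB.ne', one_smul]
  have hpu : minkHess F p p u < 1 := by
    refine hF.minkHess_lt_one hp hu fun c hc => ?_
    have h : A • x = (c - B) • u := by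
      rw [sub_smul, ← hc, hcomb]
      abel
    by_cases hcB : c - B = 0
    · rw [hcB, zero_smul, smul_eq_zero] at h
      exact h.elim hA.ne' (hF.ne_zero_of_unit hx)
    · refine hpar ((c - B)⁻¹ * A) ?_
      rw [mul_smul, h, smul_smul, inv_mul_cancel₀ hcB, one_smul]
  have hpp := hF.minkHess_unit hp
  have hAB : 1 < A + B := by
    have h := minkHess_add_smul (F := F) p p x u A B
    rw [← hcomb, hpp] at h
    nlinarith
  have hup : minkHess F u u p = A * minkHess F u u x + B := by
    rw [hcomb, minkHess_add_smul, hF.minkHess_unit hu, mul_one]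
  rw [hup]
  -- With `c = ⟨u, x⟩_u`, `A c + B - c = (A + B - 1) c + B (1 - c)` and `0 ≤ c < 1`.
  nlinarith [mul_nonneg (sub_nonneg.mpr hAB.le) hnonneg, mul_pos hB (sub_pos.mpr hx1)]

end MinkowskiNorm

/-- Nonexistence of periodic spiraling geodesic configurations
around a vertex (Assertion B). -/
theorem no_periodic_spiraling_configuration
    (n : ℕ) (hn : 1 ≤ n)
    (F : ZMod n → EuclideanSpace ℝ (Fin 2) → ℝ)
    (u v : ZMod n → EuclideanSpace ℝ (Fin 2))
    (hF : ∀ i, IsMinkowskiNorm (F i))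
    (hu : ∀ i, F i (u i) = 1)
    (hvunit : ∀ i, F i (v i) = 1)
    (hagree : ∀ i, ∀ s : ℝ, F (i - 1) (s • v i) = F i (s • v i))
    (hnotpar : ∀ i, (∀ c : ℝ, u i ≠ c • v i) ∧ (∀ c : ℝ, u i ≠ c • v (i + 1)))
    (hposcomb : ∀ i, ∃ a b : ℝ, 0 < a ∧ 0 < b ∧ v (i + 1) = a • v i + b • u i)
    (hcross : ∀ i, minkHess (F i) (u i) (u i) (v (i + 1))
        = minkHess (F (i + 1)) (u (i + 1)) (u (i + 1)) (v (i + 1))) :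
    False := by
  have : NeZero n := ⟨by omega⟩
  have hagree' : ∀ i, ∀ s : ℝ, F i (s • v (i + 1)) = F (i + 1) (s • v (i + 1)) := by
    intro i s
    simpa using hagree (i + 1) s
  set c : ZMod n → ℝ := fun i => minkHess (F i) (u i) (u i) (v i) with hc
  have hcnext : ∀ i, minkHess (F i) (u i) (u i) (v (i + 1)) = c (i + 1) := hcross
  have hv' : ∀ i, F i (v (i + 1)) = 1 := by
    intro i
    have h := hagree' i 1
    rw [one_smul] at h
    rw [h, hvunit]
  have hstep : ∀ i, 0 ≤ c i → c i < c (i + 1) := by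
    intro i hi
    obtain ⟨a, b, ha, hb, hab⟩ := hposcomb i
    rw [← hcnext]
    exact (hF i).minkHess_lt_of_between ha hb (hu i) (hvunit i) (hv' i) (hnotpar i).1 hab hi
  have hneg : ∀ i, c i < 0 := by
    intro i
    obtain ⟨j, hj⟩ := Finite.exists_max c
    by_contra! hi
    exact absurd (hstep j (hi.trans (hj i))) (not_lt.mpr (hj (j + 1)))
  set r : ZMod n → ℝ := fun i => F i ((-1 : ℝ) • v i) with hr
  have hrpos : ∀ i, 0 < r i := fun i =>
    (hF i).pos _ (smul_ne_zero (by norm_num) ((hF i).ne_zero_of_unit (hvunit i)))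
  -- For all `i`, the opposite unit vector of `v i` lies between that of `v (i + 1)` and `u i`.
  have hstep' : ∀ i, -(r (i + 1))⁻¹ * c (i + 1) < -(r i)⁻¹ * c i := by
    intro i
    obtain ⟨a, b, ha, hb, hab⟩ := hposcomb i
    have hri := hrpos i
    have hri' := hrpos (i + 1)
    have hx : F i ((-(r (i + 1))⁻¹) • v (i + 1)) = 1 := by
      have h : (-(r (i + 1))⁻¹) • v (i + 1) = (r (i + 1))⁻¹ • ((-1 : ℝ) • v (i + 1)) := by
        module
      rw [h, (hF i).homog _ (inv_pos.mpr hri').le, hagree' i (-1)]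
      exact inv_mul_cancel₀ hri'.ne'
    have hp : F i ((-(r i)⁻¹) • v i) = 1 := by
      have h : (-(r i)⁻¹) • v i = (r i)⁻¹ • ((-1 : ℝ) • v i) := by module
      rw [h, (hF i).homog _ (inv_pos.mpr hri).le]
      exact inv_mul_cancel₀ hri.ne'
    have h := (hF i).minkHess_lt_of_between (A := r (i + 1) / (a * r i)) (B := b / (a * r i))
      (by positivity) (by positivity) (hu i) hx hp
      (fun k hk => (hnotpar i).2 (k * -(r (i + 1))⁻¹) (by rw [mul_smul]; exact hk))
      (by
        rw [hab]
        match_scalars <;> field_simp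
        ring)
      (by
        rw [minkHess_smul, hcnext]
        have := mul_pos (inv_pos.mpr hri') (neg_pos.mpr (hneg (i + 1)))
        linarith)
    rw [minkHess_smul, minkHess_smul, hcnext] at h
    exact h
  obtain ⟨j, hj⟩ := Finite.exists_max fun i => -(r i)⁻¹ * c i
  have h := hstep' (j - 1)
  rw [sub_add_cancel] at h
  exact absurd h (not_lt.mpr (hj (j - 1)))
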